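/- arXiv:2204.13876 — 6 statements merged into one kernel-verified Lean document; each statement's English description precedes it below -/
import Mathlib

section
/- For all natural numbers n and m with 1 ≤ m < n, the total circular island count satisfies 𝓓ⁿₘ = Σ_{A ⊆ ℤ/nℤ, |A| = m} #{i ∈ A : i+1 ∉ A} = n · C(n−2, m−1), where C denotes the binomial coefficient. -/
/-- `circD n m` is the total circular island count: the sum, over all `m`-element
subsets `A` of `ℤ/nℤ`, of the number of islands of `A` on the circle, i.e. of
`#{i ∈ A : i + 1 ∉ A}` (addition mod `n`). -/
def circD (n m : ℕ) [NeZero n] : ℕ :=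
  ∑ A ∈ Finset.powersetCard m (Finset.univ : Finset (ZMod n)),
    (A.filter (fun i => i + 1 ∉ A)).card

/-!
Count the pairs `(i, A)` with `i ∈ A` and `i + 1 ∉ A` by `i` instead of by `A`: a set `A` making
such a pair with `i` consists of `i` and `m - 1` of the `n - 2` residues other than `i` and `i + 1`.
Only `i + 1 ≠ i` matters, so the same count works for any self-map of a finite type in place of
the successor, summing over the points it moves.
-/

open Finset

theorem filter_notMem_powersetCard {α : Type*} [DecidableEq α] (s : Finset α) (b : α) (m : ℕ) :
    {A ∈ s.powersetCard m | b ∉ A} = (s.erase b).powersetCard m := by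
  ext A
  simp only [mem_filter, mem_powersetCard, subset_erase, and_right_comm]

theorem card_filter_mem_notMem_powersetCard {α : Type*} [DecidableEq α] {s : Finset α} {a b : α}
    (ha : a ∈ s) (hb : b ∈ s) (hab : a ≠ b) {m : ℕ} (hm : 1 ≤ m) :
    #{A ∈ s.powersetCard m | a ∈ A ∧ b ∉ A} = (#s - 2).choose (m - 1) :=
  calc #{A ∈ s.powersetCard m | a ∈ A ∧ b ∉ A}
    _ = #{A ∈ (s.erase b).powersetCard m | {a} ⊆ A} := by
        simp only [← filter_notMem_powersetCard, filter_filter, singleton_subset_iff, and_comm]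
    _ = (#(s.erase b) - 1).choose (m - 1) :=
        card_filter_powersetCard_subset {a} _ m
          (singleton_subset_iff.2 (mem_erase_of_ne_of_mem hab ha)) hm
    _ = (#s - 2).choose (m - 1) := by rw [card_erase_of_mem hb, Nat.sub_sub]

theorem circular_island_count_general {α : Type*} [Fintype α] [DecidableEq α] (f : α → α) {m : ℕ}
    (hm : 1 ≤ m) :
    ∑ A ∈ powersetCard m univ, #{a ∈ A | f a ∉ A} =
      #{a | f a ≠ a} * (Fintype.card α - 2).choose (m - 1) := by
  have filter_notMem_eq (A : Finset α) :
      {a ∈ A | f a ∉ A} = {a ∈ ({a | f a ≠ a} : Finset α) | a ∈ A ∧ f a ∉ A} := by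
    ext a
    simp only [mem_filter, mem_univ, true_and]
    exact ⟨fun h ↦ ⟨(ne_of_mem_of_not_mem h.1 h.2).symm, h⟩, And.right⟩
  calc ∑ A ∈ powersetCard m univ, #{a ∈ A | f a ∉ A}
    _ = ∑ A ∈ powersetCard m univ, #{a ∈ {a | f a ≠ a} | a ∈ A ∧ f a ∉ A} :=
        sum_congr rfl fun A _ ↦ congrArg card (filter_notMem_eq A)
    _ = ∑ a with f a ≠ a, #{A ∈ powersetCard m univ | a ∈ A ∧ f a ∉ A} :=
        sum_card_bipartiteAbove_eq_sum_card_bipartiteBelow fun A a ↦ a ∈ A ∧ f a ∉ A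
    _ = #{a | f a ≠ a} * (Fintype.card α - 2).choose (m - 1) :=
        sum_const_nat fun a ha ↦ card_filter_mem_notMem_powersetCard (mem_univ a)
          (mem_univ (f a)) (mem_filter.1 ha).2.symm hm

theorem circular_island_count (n m : ℕ) [NeZero n] (hm : 1 ≤ m) (hmn : m < n) :
    circD n m = n * Nat.choose (n - 2) (m - 1) := by
  have : Fact (1 < n) := ⟨hm.trans_lt hmn⟩
  simpa [circD] using circular_island_count_general (fun i : ZMod n ↦ i + 1) hm
end

section
/- For all natural numbers n and m with 1 ≤ m < n, the alternating binomial identity Σ_{j=0}^{m−1} (−1)^j · (m−j) · C(n, m−j) = n · C(n−2, m−1) holds, where C denotes the binomial coefficient and the identity is an equation of integers. -/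
/-!
Absorption, `k * C(n, k) = n * C(n - 1, k - 1)`, removes the weights and leaves `n` times an
unweighted alternating sum of row `n - 1`, which telescopes by Pascal's rule.
-/

theorem sum_range_neg_one_pow_mul_choose_sub {R : Type*} [Ring R] (n m : ℕ) :
    ∑ j ∈ Finset.range (m + 1), (-1 : R) ^ j * ((n + 1).choose (m - j) : R) = n.choose m := by
  induction m with
  | zero => simp
  | succ m ih =>
    have tail : ∑ j ∈ Finset.range (m + 1),
        (-1 : R) ^ (j + 1) * ((n + 1).choose (m + 1 - (j + 1)) : R) = -n.choose m := by
      simp only [pow_succ', neg_mul, one_mul, Finset.sum_neg_distrib, Nat.add_sub_add_right, ih]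
    rw [Finset.sum_range_succ', tail, pow_zero, one_mul, Nat.sub_zero, Nat.choose_succ_succ',
      Nat.cast_add, neg_add_cancel_left]

theorem alternating_binomial_identity_general {R : Type*} [Ring R] {n m : ℕ}
    (hm : 1 ≤ m) (hn : 2 ≤ n) :
    ∑ j ∈ Finset.range m, (-1 : R) ^ j * ((m - j : ℕ) : R) * (n.choose (m - j) : R)
      = (n : R) * ((n - 2).choose (m - 1) : R) := by
  obtain ⟨m, rfl⟩ := Nat.exists_eq_add_of_le' hm
  obtain ⟨n, rfl⟩ := Nat.exists_eq_add_of_le' hn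
  have absorption {j : ℕ} (hj : j ≤ m) :
      (m + 1 - j) * (n + 2).choose (m + 1 - j) = (n + 2) * (n + 1).choose (m - j) := by
    rw [Nat.sub_add_comm hj, Nat.add_one_mul_choose_eq, mul_comm]
  calc ∑ j ∈ Finset.range (m + 1),
        (-1 : R) ^ j * ((m + 1 - j : ℕ) : R) * ((n + 2).choose (m + 1 - j) : R)
    _ = ∑ j ∈ Finset.range (m + 1),
        ((n + 2 : ℕ) : R) * ((-1) ^ j * ((n + 1).choose (m - j) : R)) := by
      refine Finset.sum_congr rfl fun j hj => ?_
      rw [mul_assoc, ← Nat.cast_mul, absorption (Finset.mem_range_succ_iff.mp hj), Nat.cast_mul,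
        (Nat.commute_cast _ _).left_comm]
    _ = ((n + 2 : ℕ) : R) * (n.choose m : R) := by
      rw [← Finset.mul_sum, sum_range_neg_one_pow_mul_choose_sub]

theorem alternating_binomial_identity (n m : ℕ) (hm : 1 ≤ m) (hmn : m < n) :
    ∑ j ∈ Finset.range m, (-1 : ℤ) ^ j * ((m - j : ℕ) : ℤ) * (Nat.choose n (m - j) : ℤ)
      = (n : ℤ) * (Nat.choose (n - 2) (m - 1) : ℤ) :=
  alternating_binomial_identity_general hm (hm.trans_lt hmn)
end

section
/- For all natural numbers n and m with 1 ≤ m ≤ n, the linear island counts satisfy the recurrence 𝓑ⁿₘ = 𝓑ⁿ⁻¹ₘ + Σ_{r=1}^{m−1} ( 𝓑^{n−r−1}_{m−r} + C(n−r−1, m−r) ) + 1, where C denotes the binomial coefficient and 𝓑ᵃᵦ = 0 whenever b > a or b = 0. -/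
/-- `linB n m` is the total linear island count: the sum, over all `m`-element
subsets `A` of `{1, …, n}`, of the number of islands of `A` on the line, i.e. of
`#{i ∈ A : i + 1 ∉ A}` (addition in `ℕ`). In particular `linB a b = 0` whenever
`b > a` or `b = 0`. -/
def linB (n m : ℕ) : ℕ :=
  ∑ A ∈ Finset.powersetCard m (Finset.Icc 1 n),
    (A.filter (fun i => i + 1 ∉ A)).card

/-! Split the `m`-subsets of `{1, …, n}` by whether they contain `n`; those that do not contribute
`linB (n - 1) m`. For those that do, peel off the top: if `n - 1` is missing, then `n` is an
island by itself and contributes one more than the islands below `n - 1`; if `n - 1` is present,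
deleting `n` shortens the last island without changing the number of islands, and the same
alternative arises for `n - 1`. So `r` in the theorem is the length of the last island, and the
final `1` comes from the single set whose last island is the whole set. -/

section PowersetCard

variable {α M : Type*} [DecidableEq α] [AddCommMonoid M]

lemma sum_powersetCard_succ_insert {x : α} {s : Finset α} (hx : x ∉ s) (m : ℕ)
    (f : Finset α → M) :
    ∑ A ∈ (insert x s).powersetCard (m + 1), f A =
      ∑ A ∈ s.powersetCard (m + 1), f A + ∑ A ∈ s.powersetCard m, f (insert x A) := by
  have notMem_of_mem {k : ℕ} {A : Finset α} (hA : A ∈ s.powersetCard k) : x ∉ A :=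
    fun h => hx ((Finset.mem_powersetCard.mp hA).1 h)
  have insert_injOn : Set.InjOn (insert x) (s.powersetCard m : Set (Finset α)) :=
    Finset.insert_erase_invOn.2.injOn.mono fun _ hA => notMem_of_mem (Finset.mem_coe.mp hA)
  have disjoint : Disjoint (s.powersetCard (m + 1)) ((s.powersetCard m).image (insert x)) := by
    refine Finset.disjoint_left.mpr fun A hA hA' => notMem_of_mem hA ?_
    obtain ⟨B, -, rfl⟩ := Finset.mem_image.mp hA'
    exact Finset.mem_insert_self x B
  rw [Finset.powersetCard_succ_insert hx, Finset.sum_union disjoint, Finset.sum_image insert_injOn]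

lemma sum_powersetCard_Icc_add_one (n m : ℕ) (f : Finset ℕ → M) :
    ∑ A ∈ (Finset.Icc 1 (n + 1)).powersetCard (m + 1), f A =
      ∑ A ∈ (Finset.Icc 1 n).powersetCard (m + 1), f A +
        ∑ A ∈ (Finset.Icc 1 n).powersetCard m, f (insert (n + 1) A) := by
  rw [← Finset.insert_Icc_right_eq_Icc_add_one (Nat.le_add_left 1 n)]
  exact sum_powersetCard_succ_insert (by simp) m f

end PowersetCard

/-- The right ends of the islands of `A`, one for each island. -/
def islandEnds (A : Finset ℕ) : Finset ℕ :=
  A.filter fun i => i + 1 ∉ A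

/-- The number of islands of `A`. -/
def islandCount (A : Finset ℕ) : ℕ :=
  (islandEnds A).card

section Islands

variable {A : Finset ℕ} {k : ℕ}

lemma islandEnds_insert_add_one (h : k + 2 ∉ A) :
    islandEnds (insert (k + 1) A) = insert (k + 1) ((islandEnds A).erase k) := by
  ext i
  simp only [islandEnds, Finset.mem_filter, Finset.mem_insert, Finset.mem_erase]
  grind

lemma islandCount_insert_add_one (h₁ : k + 1 ∉ A) (h₂ : k + 2 ∉ A) :
    islandCount (insert (k + 1) A) = ((islandEnds A).erase k).card + 1 := by
  have notMem : k + 1 ∉ (islandEnds A).erase k := fun h =>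
    h₁ (Finset.mem_filter.mp (Finset.mem_of_mem_erase h)).1
  rw [islandCount, islandEnds_insert_add_one h₂, Finset.card_insert_of_notMem notMem]

lemma islandCount_insert_add_one_of_notMem (h₀ : k ∉ A) (h₁ : k + 1 ∉ A) (h₂ : k + 2 ∉ A) :
    islandCount (insert (k + 1) A) = islandCount A + 1 := by
  have notMem : k ∉ islandEnds A := fun h => h₀ (Finset.mem_filter.mp h).1
  rw [islandCount_insert_add_one h₁ h₂, Finset.erase_eq_of_notMem notMem, islandCount]

lemma islandCount_insert_add_one_of_mem (h₀ : k ∈ A) (h₁ : k + 1 ∉ A) (h₂ : k + 2 ∉ A) :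
    islandCount (insert (k + 1) A) = islandCount A := by
  have mem : k ∈ islandEnds A := Finset.mem_filter.mpr ⟨h₀, h₁⟩
  rw [islandCount_insert_add_one h₁ h₂, Finset.card_erase_add_one mem, islandCount]

end Islands

/-- The total island count of the `(m + 1)`-element subsets of `{1, …, n + 1}` that contain
`n + 1`, encoded as `insert (n + 1) A` with `A` an `m`-element subset of `{1, …, n}`. -/
def linBLast (n m : ℕ) : ℕ :=
  ∑ A ∈ (Finset.Icc 1 n).powersetCard m, islandCount (insert (n + 1) A)

lemma linB_succ_succ (n m : ℕ) : linB (n + 1) (m + 1) = linB n (m + 1) + linBLast n m :=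
  sum_powersetCard_Icc_add_one n m islandCount

lemma linBLast_zero_right (n : ℕ) : linBLast n 0 = 1 := by
  simp [linBLast, islandCount, islandEnds, Finset.filter_singleton]

lemma linBLast_succ_succ (n m : ℕ) :
    linBLast (n + 1) (m + 1) = linB n (m + 1) + n.choose (m + 1) + linBLast n m := by
  have notMem_of_lt {k i : ℕ} {A : Finset ℕ} (hA : A ∈ (Finset.Icc 1 n).powersetCard k)
      (hi : n < i) : i ∉ A := fun h =>
    hi.not_ge (Finset.mem_Icc.mp ((Finset.mem_powersetCard.mp hA).1 h)).2
  have last_isolated : ∑ A ∈ (Finset.Icc 1 n).powersetCard (m + 1),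
      islandCount (insert (n + 2) A) = linB n (m + 1) + n.choose (m + 1) := calc
    _ = ∑ A ∈ (Finset.Icc 1 n).powersetCard (m + 1), (islandCount A + 1) :=
      Finset.sum_congr rfl fun A hA => islandCount_insert_add_one_of_notMem
        (notMem_of_lt hA (by lia)) (notMem_of_lt hA (by lia)) (notMem_of_lt hA (by lia))
    _ = linB n (m + 1) + n.choose (m + 1) := by
      simp [Finset.sum_add_distrib, linB, islandCount, islandEnds]
  have last_extends : ∑ A ∈ (Finset.Icc 1 n).powersetCard m,
      islandCount (insert (n + 2) (insert (n + 1) A)) = linBLast n m :=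
    Finset.sum_congr rfl fun A hA => islandCount_insert_add_one_of_mem
      (Finset.mem_insert_self _ _)
      (by simpa using notMem_of_lt hA (by lia))
      (by simpa using notMem_of_lt hA (by lia))
  rw [linBLast, sum_powersetCard_Icc_add_one, last_isolated, last_extends]

lemma linBLast_add_eq_sum (k m : ℕ) :
    linBLast (k + m) m =
      ∑ j ∈ Finset.range m, (linB (k + j) (j + 1) + (k + j).choose (j + 1)) + 1 := by
  induction m with
  | zero => simp [linBLast_zero_right]
  | succ m ih => rw [← add_assoc, linBLast_succ_succ, ih, Finset.sum_range_succ]; ring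

theorem linB_recurrence (n m : ℕ) (hm : 1 ≤ m) (hmn : m ≤ n) :
    linB n m = linB (n - 1) m
      + (∑ r ∈ Finset.Icc 1 (m - 1),
          (linB (n - r - 1) (m - r) + Nat.choose (n - r - 1) (m - r)))
      + 1 := by
  obtain ⟨m, rfl⟩ := Nat.exists_eq_add_of_le' hm
  obtain ⟨k, rfl⟩ := Nat.exists_eq_add_of_le' hmn
  rw [← add_assoc, linB_succ_succ, linBLast_add_eq_sum, ← add_assoc]
  simp only [Nat.add_sub_cancel]
  congr 2
  -- A last island of length `r = m - j` leaves `j + 1` of the `m + 1` elements below it.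
  refine Finset.sum_nbij' (m - ·) (m - ·) ?_ ?_ ?_ ?_ fun j hj => ?_
  all_goals simp only [Finset.mem_Icc, Finset.mem_range] at *
  iterate 4 lia
  rw [show k + m + 1 - (m - j) - 1 = k + j by lia, show m + 1 - (m - j) = j + 1 by lia]
end

section
/- For all natural numbers n and m with 1 ≤ m < n, the circular and linear island counts satisfy the recurrence 𝓓ⁿₘ = 𝓑ⁿ⁻¹ₘ + m + Σ_{j=1}^{m−1} j · ( 𝓑^{n−2−j}_{m−j} + C(n−2−j, m−j) ), where C denotes the binomial coefficient. -/
/-!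
Double counting the pairs `(i, A)` with `i ∈ A` and `i + 1 ∉ A` evaluates both island totals:
`𝓑ⁿₘ = (n - m + 1) C(n - 1, m - 1)` and `𝓓ⁿₘ = n C(n - 2, m - 1)`. The recurrence thus says that
`m + ∑ j (𝓑 + C) = m C(n - 2, m - 1)`. With `k = n - m - 1`, the bracket `𝓑 + C` is the
coefficient of `x ^ (m - j)` in `(1 + k x) / (1 - x) ^ k`, whose constant coefficient accounts for
the term `m`, and convolving with `j` multiplies by `x / (1 - x) ^ 2`. So the claim is
`d/dx (x / (1 - x) ^ (k + 1)) = (1 + k x) / (1 - x) ^ (k + 2)`, read off coefficientwise.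
-/

open Finset

section Multichoose

open Nat (multichoose multichoose_eq multichoose_succ_succ)

lemma sum_range_multichoose_right (n k : ℕ) :
    ∑ i ∈ range (k + 1), multichoose n i = multichoose (n + 1) k := by
  rw [Nat.sum_range_multichoose, multichoose_eq, add_right_comm, Nat.add_sub_cancel, add_comm k,
    Nat.choose_symm_add]

lemma mk_multichoose_eq_mk_one_pow (n : ℕ) :
    PowerSeries.mk (multichoose n) = PowerSeries.mk 1 ^ n := by
  induction n with
  | zero =>
    ext (_ | k)
    · simp
    · simp [PowerSeries.coeff_one]
  | succ n ih =>
    ext k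
    rw [pow_succ, ← ih, PowerSeries.coeff_mul, Nat.sum_antidiagonal_eq_sum_range_succ_mk]
    simp [sum_range_multichoose_right]

lemma add_multichoose_eq (m n k : ℕ) :
    multichoose (m + n) k = ∑ ij ∈ antidiagonal k, multichoose m ij.1 * multichoose n ij.2 := by
  have h := congrArg (PowerSeries.coeff k) (pow_add (PowerSeries.mk (1 : ℕ → ℕ)) m n)
  simpa only [← mk_multichoose_eq_mk_one_pow, PowerSeries.coeff_mul, PowerSeries.coeff_mk] using h

lemma sum_range_succ_mul_multichoose (n k : ℕ) :
    ∑ j ∈ range (k + 1), (j + 1) * multichoose n (k - j) = multichoose (n + 2) k := by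
  rw [add_comm n, add_multichoose_eq, Nat.sum_antidiagonal_eq_sum_range_succ_mk]
  simp only [Nat.multichoose_two]

lemma succ_mul_multichoose_succ (n k : ℕ) :
    (k + 1) * multichoose n (k + 1) = n * multichoose (n + 1) k := by
  have h := Nat.choose_succ_right_eq (n + k) k
  rw [Nat.add_sub_cancel] at h
  rw [multichoose_eq, multichoose_eq, add_right_comm, ← add_assoc, Nat.add_sub_cancel]
  linarith

lemma sum_Icc_mul_multichoose_add (k p : ℕ) :
    ∑ j ∈ Icc 1 p, j * (k * multichoose k (p - j) + multichoose k (p + 1 - j)) + (p + 1)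
      = (p + 1) * multichoose (k + 1) p := by
  rcases p with _ | q
  · simp
  have reindex : ∑ j ∈ Icc 1 (q + 1),
        j * (k * multichoose k (q + 1 - j) + multichoose k (q + 1 + 1 - j))
      = ∑ j ∈ range (q + 1), (j + 1) * (k * multichoose k (q - j) + multichoose k (q + 1 - j)) := by
    rw [← Ico_add_one_right_eq_Icc, sum_Ico_eq_sum_range]
    simp [add_comm 1]
  have first := sum_range_succ_mul_multichoose k q
  have second := sum_range_succ_mul_multichoose k (q + 1)
  rw [sum_range_succ, Nat.sub_self, Nat.multichoose_zero_right, mul_one] at second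
  calc
    _ = k * ∑ j ∈ range (q + 1), (j + 1) * multichoose k (q - j)
        + (∑ j ∈ range (q + 1), (j + 1) * multichoose k (q + 1 - j) + (q + 1 + 1)) := by
      rw [reindex, mul_sum, ← add_assoc _ _ (q + 1 + 1), ← sum_add_distrib]
      congr! 2
      ring
    _ = k * multichoose (k + 2) q + multichoose (k + 2) (q + 1) := by rw [first, second]
    _ = multichoose (k + 1) (q + 1) + (k + 1) * multichoose (k + 2) q := by
      rw [multichoose_succ_succ]
      ring
    _ = (q + 1 + 1) * multichoose (k + 1) (q + 1) := by
      rw [← succ_mul_multichoose_succ]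
      ring

end Multichoose

section DoubleCounting

variable {α : Type*} [DecidableEq α] {s : Finset α}

lemma card_filter_powersetCard_mem_notMem {a b : α} (ha : a ∈ s) (hab : b ≠ a) (m : ℕ) :
    #{A ∈ powersetCard (m + 1) s | a ∈ A ∧ b ∉ A} = (#(s.erase b) - 1).choose m := by
  have h : {A ∈ powersetCard (m + 1) s | a ∈ A ∧ b ∉ A}
      = {A ∈ powersetCard (m + 1) (s.erase b) | {a} ⊆ A} := by
    ext A
    simp only [mem_filter, mem_powersetCard, subset_erase, singleton_subset_iff]
    tauto
  rw [h, card_filter_powersetCard_subset] <;> simp [ha, hab.symm]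

lemma sum_powersetCard_card_filter_notMem {f : α → α} (hf : ∀ i ∈ s, f i ≠ i) (m : ℕ) :
    ∑ A ∈ powersetCard (m + 1) s, #{i ∈ A | f i ∉ A}
      = ∑ i ∈ s, (#(s.erase (f i)) - 1).choose m := by
  calc
    _ = ∑ A ∈ powersetCard (m + 1) s, #{i ∈ s | i ∈ A ∧ f i ∉ A} := by
      refine sum_congr rfl fun A hA ↦ congrArg card ?_
      rw [← filter_filter, filter_mem_eq_inter, inter_eq_right.2 (mem_powersetCard.1 hA).1]
    _ = ∑ i ∈ s, #{A ∈ powersetCard (m + 1) s | i ∈ A ∧ f i ∉ A} :=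
      sum_card_bipartiteAbove_eq_sum_card_bipartiteBelow fun A i ↦ i ∈ A ∧ f i ∉ A
    _ = _ := sum_congr rfl fun i hi ↦ card_filter_powersetCard_mem_notMem hi (hf i hi) m

end DoubleCounting

lemma circD_succ {n : ℕ} [NeZero n] (hn : 2 ≤ n) (m : ℕ) :
    circD n (m + 1) = n * (n - 2).choose m := by
  have : Fact (1 < n) := ⟨hn⟩
  rw [circD, sum_powersetCard_card_filter_notMem (by simp)]
  simp [card_erase_of_mem, ZMod.card, Nat.sub_sub]

lemma linB_succ (n m : ℕ) : linB n (m + 1) = (n - m) * (n - 1).choose m := by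
  rw [linB, sum_powersetCard_card_filter_notMem (by simp)]
  rcases n with _ | _ | n
  · simp
  · cases m <;> simp
  have interior : ∀ i ∈ Icc 1 (n + 1), (#((Icc 1 (n + 2)).erase (i + 1)) - 1).choose m
      = n.choose m := by
    intro i hi
    rw [card_erase_of_mem (by grind), Nat.card_Icc]
    rfl
  rw [sum_Icc_succ_top (by lia), sum_congr rfl interior, erase_eq_of_notMem (by simp)]
  simp only [sum_const, Nat.card_Icc, smul_eq_mul, Nat.add_sub_cancel]
  have absorption := Nat.choose_mul_succ_eq n m
  rcases le_or_gt m (n + 1) with hm | hm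
  · rw [Nat.sub_add_comm hm]
    linarith
  · simp [Nat.choose_eq_zero_of_lt hm, Nat.choose_eq_zero_of_lt (show n < m by lia)]

lemma linB_add_choose (k i : ℕ) :
    linB (k + i) (i + 1) + (k + i).choose (i + 1)
      = k * k.multichoose i + k.multichoose (i + 1) := by
  simp [linB_succ, Nat.multichoose_eq, ← add_assoc]

theorem circD_recurrence (n m : ℕ) [NeZero n] (hm : 1 ≤ m) (hmn : m < n) :
    circD n m = linB (n - 1) m + m
      + ∑ j ∈ Finset.Icc 1 (m - 1),
          j * (linB (n - 2 - j) (m - j) + Nat.choose (n - 2 - j) (m - j)) := by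
  obtain ⟨p, rfl⟩ := Nat.exists_eq_add_of_le' hm
  obtain ⟨k, rfl⟩ : ∃ k, n = k + p + 2 := ⟨n - p - 2, by lia⟩
  have summand : ∀ j ∈ Icc 1 p,
      j * (linB (k + p - j) (p + 1 - j) + (k + p - j).choose (p + 1 - j))
        = j * (k * k.multichoose (p - j) + k.multichoose (p + 1 - j)) := by
    intro j hj
    have hjp : j ≤ p := (mem_Icc.1 hj).2
    rw [Nat.add_sub_assoc hjp, Nat.sub_add_comm hjp, linB_add_choose]
  calc
    circD (k + p + 2) (p + 1) = (k + p + 2) * (k + p).choose p := circD_succ (by lia) p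
    _ = (k + 1) * (k + p).choose p + (p + 1) * (k + 1).multichoose p := by
      rw [Nat.multichoose_eq, add_right_comm k 1 p, Nat.add_sub_cancel]
      ring
    _ = linB (k + p + 1) (p + 1) + (p + 1) * (k + 1).multichoose p := by
      rw [linB_succ, add_right_comm k p 1, Nat.add_sub_cancel, add_right_comm k 1 p,
        Nat.add_sub_cancel]
    _ = _ := by
      rw [← sum_Icc_mul_multichoose_add, ← sum_congr rfl summand, add_comm (∑ j ∈ _, _),
        ← add_assoc]
      rfl
end

section
/- Let G be a simple graph on a finite vertex set V partitioned as V = V₁ ⊔ V₂ such that no edge of G joins a vertex of V₁ to a vertex of V₂. Then β_G(x) = (1+x)^{|V₂|} · β_{G[V₁]}(x) + (1+x)^{|V₁|} · β_{G[V₂]}(x) as polynomials with integer coefficients; in particular, if V₁ and V₂ are both nonempty then β_G(−1) = 0. -/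
open Polynomial

/-- `islandF G S` is the quantity `f_G(S) = 2·c_G(S) + e_G(S) − |S|`, where `c_G(S)`
and `e_G(S)` are the numbers of connected components and edges of the induced
subgraph `G[S]`.  For a planar graph it equals the total number of faces of a
planar embedding of `G[S]`, summed over connected components. -/
noncomputable def islandF {V : Type*} [Fintype V] [DecidableEq V]
    (G : SimpleGraph V) (S : Finset V) : ℤ :=
  2 * Nat.card ((G.induce (S : Set V)).ConnectedComponent)
    + Nat.card ((G.induce (S : Set V)).edgeSet) - S.card

/-- The total island boundary polynomial `β_G(x) = Σ_{∅ ≠ S ⊆ V} f_G(S)·x^{|S|−1}`. -/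
noncomputable def islandPoly {V : Type*} [Fintype V] [DecidableEq V]
    (G : SimpleGraph V) : Polynomial ℤ :=
  ∑ S ∈ Finset.univ.powerset.filter (fun S : Finset V => S.Nonempty),
    Polynomial.C (islandF G S) * Polynomial.X ^ (S.card - 1)

/-!
Multiplying `β_G` by `x` turns it into `Σ_S f_G(S) x^|S|` over all `S`, because `f_G(∅) = 0`. The
hypothesis says that `G` is the disjoint sum of `G[V₁]` and `G[V₂]`. A vertex set of that sum is a
pair `(S, T)`, and `f` is additive on such pairs, so `x β_G` is the double sum
`Σ_S Σ_T (f(S) + f(T)) x^(|S| + |T|)`. In each of its two halves one index only contributes a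
binomial expansion `Σ_T x^|T| = (1 + x)^|V₂|`.
-/

section Graph

variable {V W : Type*} {G : SimpleGraph V} {H : SimpleGraph W}

theorem eq_of_reachable {β : Type*} {f : V → β} (hf : ∀ u v, G.Adj u v → f u = f v) {u v : V}
    (h : G.Reachable u v) : f u = f v := by
  obtain ⟨p⟩ := h
  induction p with
  | nil => rfl
  | cons hadj _ ih => exact (hf _ _ hadj).trans ih

variable (G H) in
/-- The connected components of a disjoint sum of graphs are those of either summand. -/
def connectedComponentSumEquiv :
    (G ⊕g H).ConnectedComponent ≃ G.ConnectedComponent ⊕ H.ConnectedComponent where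
  toFun := Quot.lift (Sum.map G.connectedComponentMk H.connectedComponentMk) fun _ _ =>
    eq_of_reachable <| by
      rintro (u | u) (v | v) hadj
      · exact congrArg Sum.inl
          (SimpleGraph.ConnectedComponent.connectedComponentMk_eq_of_adj hadj)
      · simp at hadj
      · simp at hadj
      · exact congrArg Sum.inr
          (SimpleGraph.ConnectedComponent.connectedComponentMk_eq_of_adj hadj)
  invFun := Sum.elim
    (SimpleGraph.ConnectedComponent.map SimpleGraph.Embedding.sumInl.toHom)
    (SimpleGraph.ConnectedComponent.map SimpleGraph.Embedding.sumInr.toHom)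
  left_inv := by rintro ⟨v | v⟩ <;> rfl
  right_inv := by rintro (⟨⟨v⟩⟩ | ⟨⟨v⟩⟩) <;> rfl

variable (G H) in
/-- An induced subgraph of a disjoint sum is the disjoint sum of the subgraphs that its vertex set
induces in the two summands. -/
def induceSumIso (s : Set (V ⊕ W)) :
    (G ⊕g H).induce s ≃g G.induce (Sum.inl ⁻¹' s) ⊕g H.induce (Sum.inr ⁻¹' s) where
  toEquiv := Equiv.subtypeSum
  map_rel_iff' := by rintro ⟨a | a, ha⟩ ⟨b | b, hb⟩ <;> simp [Equiv.subtypeSum]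

/-- A graph none of whose edges joins `s` to its complement `t` is the disjoint sum of the subgraphs
induced on `s` and `t`. -/
def sumInduceIsoOfIsCompl {s t : Set V} [DecidablePred (· ∈ s)] (hst : IsCompl s t)
    (hadj : ∀ a b, G.Adj a b → (a ∈ s ↔ b ∈ s)) : G.induce s ⊕g G.induce t ≃g G where
  toEquiv := ((Equiv.refl s).sumCongr (Equiv.setCongr hst.compl_eq.symm)).trans
    (Equiv.Set.sumCompl s)
  map_rel_iff' := by
    have notMem_of_mem {x : V} (hx : x ∈ t) : x ∉ s := hst.disjoint.notMem_of_mem_right hx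
    rintro (⟨a, ha⟩ | ⟨a, ha⟩) (⟨b, hb⟩ | ⟨b, hb⟩)
    · simp
    · simpa using fun h => notMem_of_mem hb ((hadj a b h).1 ha)
    · simpa using fun h => notMem_of_mem ha ((hadj a b h).2 hb)
    · simp

/-- The face count `2c + e - n` of a graph with `c` components, `e` edges and `n` vertices, so that
`f_G(S)` is the face count of `G[S]`. Infinite cardinalities count as `0`. -/
noncomputable def faceCount (G : SimpleGraph V) : ℤ :=
  2 * Nat.card G.ConnectedComponent + Nat.card G.edgeSet - Nat.card V

theorem faceCount_of_isEmpty [IsEmpty V] (G : SimpleGraph V) : faceCount G = 0 := by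
  simp [faceCount]

theorem faceCount_congr (φ : G ≃g H) : faceCount G = faceCount H := by
  simp only [faceCount, Nat.card_congr φ.connectedComponentEquiv, Nat.card_congr φ.mapEdgeSet,
    Nat.card_congr φ.toEquiv]

theorem faceCount_sum [Finite V] [Finite W] (G : SimpleGraph V) (H : SimpleGraph W) :
    faceCount (G ⊕g H) = faceCount G + faceCount H := by
  simp only [faceCount, Nat.card_congr (connectedComponentSumEquiv G H),
    Nat.card_congr (SimpleGraph.edgeSetSumEquiv (G := G) (H := H)), Nat.card_sum]
  push_cast
  ring

end Graph

section SubsetSums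

variable {V W : Type*} [Fintype V]

theorem sum_pow_card_eq_one_add_pow {R : Type*} [CommSemiring R] (x : R) :
    ∑ S : Finset V, x ^ S.card = (1 + x) ^ Fintype.card V := by
  simpa [add_comm] using Fintype.sum_pow_mul_eq_add_pow V x 1

theorem sum_finset_sum_eq_sum_disjSum [Fintype W] {M : Type*} [AddCommMonoid M]
    (f : Finset (V ⊕ W) → M) :
    ∑ U, f U = ∑ S : Finset V, ∑ T : Finset W, f (S.disjSum T) :=
  (Finset.sumEquiv.symm.toEquiv.sum_comp f).symm.trans (Fintype.sum_prod_type _)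

end SubsetSums

section IslandPoly

variable {V W : Type*} [Fintype V] [DecidableEq V] [Fintype W] [DecidableEq W]

theorem islandF_eq_faceCount (G : SimpleGraph V) (S : Finset V) :
    islandF G S = faceCount (G.induce (S : Set V)) := by
  simp [islandF, faceCount]

theorem islandF_empty (G : SimpleGraph V) : islandF G ∅ = 0 := by
  have : IsEmpty ((∅ : Finset V) : Set V) := by simp
  rw [islandF_eq_faceCount, faceCount_of_isEmpty]

theorem islandF_map {G : SimpleGraph V} {H : SimpleGraph W} (φ : G ≃g H) (S : Finset V) :
    islandF H (S.map φ.toEquiv.toEmbedding) = islandF G S := by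
  have hφ : Set.BijOn φ S (S.map φ.toEquiv.toEmbedding : Finset W) := by
    rw [Finset.coe_map]
    exact φ.injective.injOn.bijOn_image
  rw [islandF_eq_faceCount, islandF_eq_faceCount, faceCount_congr (φ.induce hφ)]

theorem islandF_disjSum (G : SimpleGraph V) (H : SimpleGraph W) (S : Finset V) (T : Finset W) :
    islandF (G ⊕g H) (S.disjSum T) = islandF G S + islandF H T := by
  have preimage_inl : Sum.inl ⁻¹' (S.disjSum T : Set (V ⊕ W)) = S := by ext; simp
  have preimage_inr : Sum.inr ⁻¹' (S.disjSum T : Set (V ⊕ W)) = T := by ext; simp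
  simp only [islandF_eq_faceCount]
  rw [faceCount_congr (induceSumIso G H _), preimage_inl, preimage_inr, faceCount_sum]

theorem X_mul_islandPoly (G : SimpleGraph V) :
    X * islandPoly G = ∑ S : Finset V, C (islandF G S) * X ^ S.card := by
  rw [islandPoly, Finset.powerset_univ, Finset.mul_sum, Finset.sum_filter]
  refine Finset.sum_congr rfl fun S _ => ?_
  split_ifs with hS
  · rw [mul_left_comm, mul_pow_sub_one hS.card_ne_zero]
  · rw [Finset.not_nonempty_iff_eq_empty.1 hS, islandF_empty, C_0, zero_mul]

theorem islandPoly_congr {G : SimpleGraph V} {H : SimpleGraph W} (φ : G ≃g H) :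
    islandPoly G = islandPoly H := by
  apply mul_left_cancel₀ (X_ne_zero (R := ℤ))
  rw [X_mul_islandPoly, X_mul_islandPoly]
  refine Fintype.sum_equiv φ.toEquiv.finsetCongr _ _ fun S => ?_
  rw [Equiv.finsetCongr_apply, islandF_map, Finset.card_map]

theorem islandPoly_sum (G : SimpleGraph V) (H : SimpleGraph W) :
    islandPoly (G ⊕g H) = (1 + X) ^ Fintype.card W * islandPoly G
      + (1 + X) ^ Fintype.card V * islandPoly H := by
  apply mul_left_cancel₀ (X_ne_zero (R := ℤ))
  calc X * islandPoly (G ⊕g H)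
      = ∑ S : Finset V, ∑ T : Finset W,
          C (islandF (G ⊕g H) (S.disjSum T)) * X ^ (S.disjSum T).card := by
        rw [X_mul_islandPoly, sum_finset_sum_eq_sum_disjSum]
    _ = ∑ S : Finset V, ∑ T : Finset W,
          (C (islandF G S) * X ^ S.card * X ^ T.card
            + X ^ S.card * (C (islandF H T) * X ^ T.card)) := by
        refine Finset.sum_congr rfl fun S _ => Finset.sum_congr rfl fun T _ => ?_
        rw [islandF_disjSum, Finset.card_disjSum, C_add, pow_add]
        ring
    _ = X * islandPoly G * (1 + X) ^ Fintype.card W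
          + (1 + X) ^ Fintype.card V * (X * islandPoly H) := by
        simp only [Finset.sum_add_distrib, ← Finset.sum_mul_sum, sum_pow_card_eq_one_add_pow,
          X_mul_islandPoly]
    _ = X * ((1 + X) ^ Fintype.card W * islandPoly G
          + (1 + X) ^ Fintype.card V * islandPoly H) := by ring

end IslandPoly

theorem islandPoly_disjUnion {V : Type*} [Fintype V] [DecidableEq V]
    (G : SimpleGraph V) (V₁ V₂ : Finset V)
    (hdisj : Disjoint V₁ V₂) (hcover : V₁ ∪ V₂ = Finset.univ)
    (hedge : ∀ a b : V, G.Adj a b → (a ∈ V₁ ↔ b ∈ V₁)) :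
    islandPoly G
        = (1 + Polynomial.X) ^ V₂.card * islandPoly (G.induce (V₁ : Set V))
          + (1 + Polynomial.X) ^ V₁.card * islandPoly (G.induce (V₂ : Set V))
      ∧ (V₁.Nonempty → V₂.Nonempty → (islandPoly G).eval (-1) = 0) := by
  have hcompl : IsCompl (V₁ : Set V) (V₂ : Set V) :=
    ⟨Finset.disjoint_coe.2 hdisj, codisjoint_iff.2 (by simp [← Finset.coe_union, hcover])⟩
  have hpoly : islandPoly G
      = (1 + X) ^ V₂.card * islandPoly (G.induce (V₁ : Set V))
        + (1 + X) ^ V₁.card * islandPoly (G.induce (V₂ : Set V)) := by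
    rw [← islandPoly_congr (sumInduceIsoOfIsCompl hcompl hedge), islandPoly_sum]
    simp
  refine ⟨hpoly, fun hV₁ hV₂ => ?_⟩
  simp [hpoly, hV₁.card_ne_zero, hV₂.card_ne_zero]
end

section
/- Let T be a tree (a connected acyclic simple graph) on a finite vertex set V with n = |V| ≥ 2, and let κ : V → C be a vertex coloring such that adjacent vertices receive different colors, using exactly c = |κ(V)| colors. Then β_{T,κ}(x) = (1+x)^{c−1} + (n−1)·(1+x)^{c−2} as polynomials with integer coefficients. -/
open Polynomial

/-- The colored total island boundary polynomial
`β_{G,κ}(x) = Σ_{∅ ≠ T ⊆ κ(V)} f_G(κ⁻¹(T))·x^{|T|−1}`, the sum ranging over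
nonempty subsets `T` of the set of colors used by `κ`. -/
noncomputable def coloredIslandPoly {V : Type*} [Fintype V] [DecidableEq V]
    {γ : Type*} [DecidableEq γ] (G : SimpleGraph V) (κ : V → γ) : Polynomial ℤ :=
  ∑ T ∈ (Finset.univ.image κ).powerset.filter (fun T : Finset γ => T.Nonempty),
    Polynomial.C (islandF G (Finset.univ.filter (fun v => κ v ∈ T)))
      * Polynomial.X ^ (T.card - 1)

/-!
In a forest the numbers of components and edges add up to the number of vertices, and induced
subgraphs of forests are forests, so `f_G(S) = |S| - e_G(S)`. Exchanging the order of summation,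
a vertex or an edge whose set of colors is `A` is counted by the color sets containing `A`, and
these contribute `x ^ (|A| - 1) * (1 + x) ^ (c - |A|)` by the binomial theorem. Writing the number
of vertices as the number of components plus the number of edges, pair each edge with one of the
summands `(1 + x) ^ (c - 1)`: the difference is `0` for a monochromatic edge and
`(1 + x) ^ (c - 2)` for a bichromatic one.
-/

open scoped Finset

section PowerSums

variable {α ι R : Type*} [DecidableEq α] [CommSemiring R]

theorem sum_Icc_pow_card_sub_card {A C : Finset α} (hAC : A ⊆ C) (x : R) :
    ∑ T ∈ Finset.Icc A C, x ^ (#T - #A) = (1 + x) ^ (#C - #A) := by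
  have hdisj : ∀ U ∈ (C \ A).powerset, Disjoint A U := fun U hU ↦
    Finset.disjoint_sdiff.mono_right (Finset.mem_powerset.1 hU)
  have hinj : Set.InjOn (A ∪ ·) ((C \ A).powerset : Set (Finset α)) := fun U hU U' hU' h ↦ by
    rw [← Finset.union_sdiff_cancel_left (hdisj U hU),
      ← Finset.union_sdiff_cancel_left (hdisj U' hU')]
    exact congrArg (· \ A) h
  calc ∑ T ∈ Finset.Icc A C, x ^ (#T - #A)
      = ∑ U ∈ (C \ A).powerset, x ^ #U := by
        rw [Finset.Icc_eq_image_powerset hAC, Finset.sum_image hinj]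
        refine Finset.sum_congr rfl fun U hU ↦ ?_
        rw [Finset.card_union_of_disjoint (hdisj U hU), Nat.add_sub_cancel_left]
    _ = (1 + x) ^ (#C - #A) := by
        rw [add_comm, ← Finset.card_sdiff_of_subset hAC, ← Finset.sum_pow_mul_eq_add_pow]
        simp only [one_pow, mul_one]

theorem sum_Icc_pow_card_sub_one {A C : Finset α} (hA : A.Nonempty)
    (hAC : A ⊆ C) (x : R) :
    ∑ T ∈ Finset.Icc A C, x ^ (#T - 1) = x ^ (#A - 1) * (1 + x) ^ (#C - #A) := by
  rw [← sum_Icc_pow_card_sub_card hAC, Finset.mul_sum]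
  refine Finset.sum_congr rfl fun T hT ↦ ?_
  have hAT : #A ≤ #T := Finset.card_le_card (Finset.mem_Icc.1 hT).1
  have hA_pos : 0 < #A := hA.card_pos
  rw [← pow_add]
  congr 1
  omega

theorem sum_card_filter_subset_mul_pow {C : Finset α} (s : Finset ι)
    (A : ι → Finset α) (hA : ∀ i ∈ s, (A i).Nonempty) (hAC : ∀ i ∈ s, A i ⊆ C) (x : R) :
    ∑ T ∈ C.powerset with T.Nonempty, (#{i ∈ s | A i ⊆ T} : R) * x ^ (#T - 1)
      = ∑ i ∈ s, x ^ (#(A i) - 1) * (1 + x) ^ (#C - #(A i)) := by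
  have hIcc : ∀ i ∈ s, {T ∈ C.powerset | T.Nonempty} ∩ {T ∈ C.powerset | A i ⊆ T}
      = Finset.Icc (A i) C := fun i hi ↦ by
    rw [Finset.Icc_eq_filter_powerset, Finset.inter_eq_right]
    exact Finset.monotone_filter_right _ fun T _ hT ↦ (hA i hi).mono hT
  calc ∑ T ∈ C.powerset with T.Nonempty, (#{i ∈ s | A i ⊆ T} : R) * x ^ (#T - 1)
      = ∑ i ∈ s, ∑ T ∈ C.powerset with T.Nonempty, if A i ⊆ T then x ^ (#T - 1) else 0 := by
        rw [Finset.sum_comm]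
        refine Finset.sum_congr rfl fun T _ ↦ ?_
        rw [← Finset.sum_filter, Finset.sum_const, nsmul_eq_mul]
    _ = ∑ i ∈ s, x ^ (#(A i) - 1) * (1 + x) ^ (#C - #(A i)) := by
        refine Finset.sum_congr rfl fun i hi ↦ ?_
        rw [← sum_Icc_pow_card_sub_one (hA i hi) (hAC i hi), ← hIcc i hi, ← Finset.sum_filter,
          ← Finset.filter_and, Finset.filter_filter]

end PowerSums

section Forests

variable {V : Type*} [Fintype V] (G : SimpleGraph V) [DecidableRel G.Adj]

theorem sum_card_edgeFinset_toSimpleGraph [Fintype G.ConnectedComponent]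
    [∀ c : G.ConnectedComponent, Fintype c.toSimpleGraph.edgeSet] :
    ∑ c : G.ConnectedComponent, #c.toSimpleGraph.edgeFinset = #G.edgeFinset := by
  classical
  have hcomponent : ∀ c : G.ConnectedComponent,
      #c.toSimpleGraph.edgeFinset = #{e ∈ G.edgeFinset | e ∈ c.supp.toFinset.sym2} := fun c ↦ by
    rw [Finset.filter_mem_eq_inter, ← SimpleGraph.map_edgeFinset_induce, Finset.card_map]
    congr!
  have hunique : ∀ e ∈ G.edgeFinset,
      #{c : G.ConnectedComponent | e ∈ c.supp.toFinset.sym2} = 1 := fun e he ↦ by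
    induction e with | _ u v
    have huv : G.connectedComponentMk v = G.connectedComponentMk u :=
      SimpleGraph.ConnectedComponent.connectedComponentMk_eq_of_adj
        (SimpleGraph.mem_edgeFinset.1 he).symm
    simp [huv, Finset.filter_eq]
  calc ∑ c : G.ConnectedComponent, #c.toSimpleGraph.edgeFinset
      = ∑ c : G.ConnectedComponent, #{e ∈ G.edgeFinset | e ∈ c.supp.toFinset.sym2} :=
        Finset.sum_congr rfl fun c _ ↦ hcomponent c
    _ = ∑ e ∈ G.edgeFinset, #{c : G.ConnectedComponent | e ∈ c.supp.toFinset.sym2} :=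
        Finset.sum_card_bipartiteAbove_eq_sum_card_bipartiteBelow _
    _ = #G.edgeFinset := by
        rw [Finset.sum_congr rfl hunique, Finset.sum_const, smul_eq_mul, mul_one]

variable {G}

theorem card_connectedComponent_of_connected {V : Type*} {G : SimpleGraph V} (hG : G.Connected) :
    Nat.card G.ConnectedComponent = 1 :=
  Nat.card_eq_one_iff_unique.2
    ⟨hG.preconnected.subsingleton_connectedComponent, hG.nonempty.map G.connectedComponentMk⟩

theorem card_connectedComponent_add_card_edgeFinset_of_isAcyclic (hG : G.IsAcyclic) :
    Nat.card G.ConnectedComponent + #G.edgeFinset = Fintype.card V := by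
  classical
  calc Nat.card G.ConnectedComponent + #G.edgeFinset
      = ∑ c : G.ConnectedComponent, (#c.toSimpleGraph.edgeFinset + 1) := by
        rw [Finset.sum_add_distrib, sum_card_edgeFinset_toSimpleGraph, ← Finset.card_eq_sum_ones,
          Finset.card_univ, Nat.card_eq_fintype_card, add_comm]
    _ = ∑ c : G.ConnectedComponent, Fintype.card c :=
        Finset.sum_congr rfl fun c _ ↦ (hG.isTree_connectedComponent c).card_edgeFinset
    _ = Fintype.card V := by
        rw [← Fintype.card_sigma]
        exact Fintype.card_congr (Equiv.sigmaFiberEquiv G.connectedComponentMk)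

theorem islandF_of_isAcyclic [DecidableEq V] (hG : G.IsAcyclic) (S : Finset V) :
    islandF G S = #S - #{e ∈ G.edgeFinset | e.toFinset ⊆ S} := by
  have hforest :=
    card_connectedComponent_add_card_edgeFinset_of_isAcyclic (hG.induce (S : Set V))
  have hcard : Fintype.card (S : Set V) = #S := Fintype.card_coe S
  have hedges : Nat.card (G.induce (S : Set V)).edgeSet = #(G.induce (S : Set V)).edgeFinset := by
    rw [SimpleGraph.edgeFinset_card, Nat.card_eq_fintype_card]
  rw [islandF, SimpleGraph.card_filter_edgeFinset_toFinset_subset]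
  omega

end Forests

section Colorings

variable {V γ : Type*} {G : SimpleGraph V} [DecidableEq γ]

theorem filter_not_isDiag_map_of_proper [Fintype G.edgeSet] {κ : V → γ}
    (hproper : ∀ a b : V, G.Adj a b → κ a ≠ κ b) :
    {e ∈ G.edgeFinset | ¬(e.map κ).IsDiag} = G.edgeFinset := by
  refine Finset.filter_true_of_mem fun e he ↦ ?_
  induction e with | _ a b
  exact hproper a b (SimpleGraph.mem_edgeFinset.1 he)

theorem pow_sub_pow_card_toFinset_mul_pow {R : Type*} [CommRing R] {C : Finset γ} {z : Sym2 γ}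
    (hz : z.toFinset ⊆ C) (x : R) :
    (1 + x) ^ (#C - 1) - x ^ (#z.toFinset - 1) * (1 + x) ^ (#C - #z.toFinset)
      = if z.IsDiag then 0 else (1 + x) ^ (#C - 2) := by
  split_ifs with hdiag
  · simp [Sym2.card_toFinset_of_isDiag z hdiag]
  · have hcard := Finset.card_le_card hz
    rw [Sym2.card_toFinset_of_not_isDiag z hdiag] at hcard ⊢
    obtain ⟨k, hk⟩ := Nat.exists_eq_add_of_le' hcard
    simp only [hk, Nat.add_sub_cancel, show k + 2 - 1 = k + 1 from rfl, show 2 - 1 = 1 from rfl]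
    ring

variable [Fintype V]

theorem toFinset_map_subset_image_univ (κ : V → γ) (e : Sym2 V) :
    (e.map κ).toFinset ⊆ Finset.univ.image κ := by
  simp [Finset.subset_iff]

variable [DecidableEq V] [DecidableRel G.Adj]

theorem toFinset_map_subset_iff (κ : V → γ) (e : Sym2 V) (T : Finset γ) :
    (e.map κ).toFinset ⊆ T ↔ e.toFinset ⊆ ({v | κ v ∈ T} : Finset V) := by
  simp [Finset.subset_iff]

-- Stated with `{κ v} ⊆ T` so that vertices and edges are counted in the same way.
theorem islandF_preimage_of_isAcyclic (hG : G.IsAcyclic) (κ : V → γ) (T : Finset γ) :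
    islandF G {v | κ v ∈ T}
      = #{v | {κ v} ⊆ T} - #{e ∈ G.edgeFinset | (e.map κ).toFinset ⊆ T} := by
  simp only [islandF_of_isAcyclic hG, toFinset_map_subset_iff, Finset.singleton_subset_iff]

theorem coloredIslandPoly_eq_card_mul_sub_sum_of_isAcyclic (hG : G.IsAcyclic) (κ : V → γ) :
    coloredIslandPoly G κ
      = (Fintype.card V : ℤ[X]) * (1 + X) ^ (#(Finset.univ.image κ) - 1)
        - ∑ e ∈ G.edgeFinset, X ^ (#(e.map κ).toFinset - 1)
            * (1 + X) ^ (#(Finset.univ.image κ) - #(e.map κ).toFinset) := by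
  have hvertices := sum_card_filter_subset_mul_pow (C := Finset.univ.image κ) Finset.univ
    (fun v ↦ {κ v}) (by simp) (by simp) (X : ℤ[X])
  have hedges := sum_card_filter_subset_mul_pow G.edgeFinset (fun e ↦ (e.map κ).toFinset)
    (fun e _ ↦ Finset.nonempty_iff_ne_empty.2 (Sym2.toFinset_ne_empty _))
    (fun e _ ↦ toFinset_map_subset_image_univ κ e) (X : ℤ[X])
  simp only [Finset.card_singleton, Nat.sub_self, pow_zero, one_mul, Finset.sum_const,
    Finset.card_univ, nsmul_eq_mul] at hvertices
  rw [← hvertices, ← hedges, ← Finset.sum_sub_distrib]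
  refine Finset.sum_congr rfl fun T _ ↦ ?_
  rw [islandF_preimage_of_isAcyclic hG, ← sub_mul]
  simp only [map_sub, map_natCast]

/-- If at most one color is used, then the second exponent is truncated, but its coefficient
vanishes because no edge is bichromatic. -/
theorem coloredIslandPoly_tree_general (hG : G.IsAcyclic) (κ : V → γ) :
    coloredIslandPoly G κ
      = C (Nat.card G.ConnectedComponent : ℤ) * (1 + X) ^ (#(Finset.univ.image κ) - 1)
        + C (#{e ∈ G.edgeFinset | ¬(e.map κ).IsDiag} : ℤ)
            * (1 + X) ^ (#(Finset.univ.image κ) - 2) := by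
  have hforest : (Fintype.card V : ℤ[X]) = Nat.card G.ConnectedComponent + #G.edgeFinset := by
    exact_mod_cast (card_connectedComponent_add_card_edgeFinset_of_isAcyclic hG).symm
  set c := #(Finset.univ.image κ)
  calc coloredIslandPoly G κ
      = (Fintype.card V : ℤ[X]) * (1 + X) ^ (c - 1)
          - ∑ e ∈ G.edgeFinset, X ^ (#(e.map κ).toFinset - 1)
              * (1 + X) ^ (c - #(e.map κ).toFinset) :=
        coloredIslandPoly_eq_card_mul_sub_sum_of_isAcyclic hG κ
    _ = (Nat.card G.ConnectedComponent : ℤ[X]) * (1 + X) ^ (c - 1)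
          + ∑ e ∈ G.edgeFinset, ((1 + X) ^ (c - 1) - X ^ (#(e.map κ).toFinset - 1)
              * (1 + X) ^ (c - #(e.map κ).toFinset)) := by
        rw [hforest, Finset.sum_sub_distrib, Finset.sum_const, nsmul_eq_mul]
        ring
    _ = (Nat.card G.ConnectedComponent : ℤ[X]) * (1 + X) ^ (c - 1)
          + ∑ e ∈ G.edgeFinset, if (e.map κ).IsDiag then 0 else (1 + X) ^ (c - 2) := by
        congr! 2 with e
        exact pow_sub_pow_card_toFinset_mul_pow (toFinset_map_subset_image_univ κ e) X
    _ = C (Nat.card G.ConnectedComponent : ℤ) * (1 + X) ^ (c - 1)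
          + C (#{e ∈ G.edgeFinset | ¬(e.map κ).IsDiag} : ℤ) * (1 + X) ^ (c - 2) := by
        simp only [Finset.sum_ite, Finset.sum_const_zero, zero_add, Finset.sum_const, nsmul_eq_mul,
          map_natCast]

end Colorings

theorem coloredIslandPoly_tree {V : Type*} [Fintype V] [DecidableEq V]
    {γ : Type*} [DecidableEq γ] (T : SimpleGraph V) (hT : T.IsTree)
    (hn : 2 ≤ Fintype.card V)
    (κ : V → γ) (hproper : ∀ a b : V, T.Adj a b → κ a ≠ κ b) :
    coloredIslandPoly T κ
      = (1 + Polynomial.X) ^ ((Finset.univ.image κ).card - 1)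
        + Polynomial.C ((Fintype.card V - 1 : ℕ) : ℤ)
            * (1 + Polynomial.X) ^ ((Finset.univ.image κ).card - 2) := by
  classical
  rw [coloredIslandPoly_tree_general hT.isAcyclic, filter_not_isDiag_map_of_proper hproper,
    card_connectedComponent_of_connected hT.connected, ← hT.card_edgeFinset, Nat.add_sub_cancel,
    Nat.cast_one, C_1, one_mul]
end
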